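/- Let X be a set and k a symmetric positive-definite kernel on X with C_k := sup_{x,x'} k(x,x') < ∞. Let Q be a probability measure on X and Q^n = (1/n) Σ_{i=1}^n δ_{x_i} the empirical measure of n i.i.d. samples x_1,…,x_n from Q. Then for any probability measure P on X and any δ ∈ (0,1), with probability at least 1−δ, |MMD_k(P,Q) − MMD_k(P,Q^n)| ≤ 2√(C_k/n) + √(2 C_k log(1/δ)/n); in particular |MMD_k(P,Q) − MMD_k(P,Q^n)| = O(n^{−1/2}) with high probability. -/

import Mathlib

open MeasureTheory ENNReal

/-- A symmetric, positive-definite kernel. -/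
def IsPosDefKernel {𝒳 : Type*} (k : 𝒳 → 𝒳 → ℝ) : Prop :=
  (∀ x y, k x y = k y x) ∧
    ∀ (n : ℕ) (x : Fin n → 𝒳) (a : Fin n → ℝ),
      0 ≤ ∑ i, ∑ j, a i * a j * k (x i) (x j)

/-- The squared maximum mean discrepancy between two measures, given by the kernel-integral
formula `∫∫ k dP dP − 2 ∫∫ k dP dQ + ∫∫ k dQ dQ`. -/
noncomputable def mmdSq {𝒳 : Type*} [MeasurableSpace 𝒳] (k : 𝒳 → 𝒳 → ℝ)
    (P Q : Measure 𝒳) : ℝ :=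
  (∫ x, ∫ y, k x y ∂P ∂P) - 2 * (∫ x, ∫ y, k x y ∂Q ∂P) + (∫ x, ∫ y, k x y ∂Q ∂Q)

/-- The maximum mean discrepancy, the nonnegative square root of `mmdSq`. -/
noncomputable def mmd {𝒳 : Type*} [MeasurableSpace 𝒳] (k : 𝒳 → 𝒳 → ℝ)
    (P Q : Measure 𝒳) : ℝ :=
  Real.sqrt (mmdSq k P Q)

/-- The empirical measure `(1/n) ∑ᵢ δ_{x i}` of the points `x : Fin n → 𝒳`. -/
noncomputable def empiricalMeasure {𝒳 : Type*} [MeasurableSpace 𝒳] {n : ℕ}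
    (x : Fin n → 𝒳) : Measure 𝒳 :=
  (n : ℝ≥0∞)⁻¹ • ∑ i, Measure.dirac (x i)

lemma pd_fintype {𝒳 ι : Type*} [Fintype ι] {k : 𝒳 → 𝒳 → ℝ} (hk : IsPosDefKernel k)
    (x : ι → 𝒳) (a : ι → ℝ) : 0 ≤ ∑ i, ∑ j, a i * a j * k (x i) (x j) := by
  have e := (Fintype.equivFin ι).symm
  have h := hk.2 (Fintype.card ι) (x ∘ e) (a ∘ e)
  rw [← Equiv.sum_comp e]
  simp_rw [← Equiv.sum_comp e (fun j => a _ * a j * k (x _) (x j))]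
  exact h

lemma pd_abs_le {𝒳 : Type*} {k : 𝒳 → 𝒳 → ℝ} (hk : IsPosDefKernel k) {C : ℝ}
    (hC : ∀ x y, k x y ≤ C) (x y : 𝒳) : |k x y| ≤ C := by
  rw [abs_le]
  refine ⟨?_, hC x y⟩
  have h := hk.2 2 ![x, y] ![1, 1]
  simp [Fin.sum_univ_two] at h
  have := hk.1 x y
  have := hC x x
  have := hC y y
  linarith

lemma pd_diag {𝒳 : Type*} {k : 𝒳 → 𝒳 → ℝ} (hk : IsPosDefKernel k) (x : 𝒳) : 0 ≤ k x x := by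
  have h := hk.2 1 ![x] ![1]
  simpa using h

lemma integrable_bdd {α : Type*} [MeasurableSpace α] {μ : Measure α} [IsFiniteMeasure μ]
    {f : α → ℝ} (hf : Measurable f) {C : ℝ} (hC : ∀ x, |f x| ≤ C) : Integrable f μ :=
  Integrable.of_bound hf.aestronglyMeasurable C (Filter.Eventually.of_forall hC)

lemma abs_integral_le {α : Type*} [MeasurableSpace α] {μ : Measure α} [IsProbabilityMeasure μ]
    {f : α → ℝ} {C : ℝ} (hC : ∀ x, |f x| ≤ C) : |∫ x, f x ∂μ| ≤ C := by
  have := norm_integral_le_of_norm_le_const (μ := μ) (f := f) (C := C)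
    (Filter.Eventually.of_forall hC)
  simpa using this

lemma meas_inner {𝒳 : Type*} [MeasurableSpace 𝒳] {k : 𝒳 → 𝒳 → ℝ}
    (hm : Measurable (Function.uncurry k)) (Q : Measure 𝒳) [IsProbabilityMeasure Q] :
    Measurable (fun x => ∫ y, k x y ∂Q) :=
  (hm.stronglyMeasurable.integral_prod_right (ν := Q)).measurable

lemma meas_comp2 {𝒳 α : Type*} [MeasurableSpace 𝒳] [MeasurableSpace α] {k : 𝒳 → 𝒳 → ℝ}
    (hm : Measurable (Function.uncurry k)) {f g : α → 𝒳} (hf : Measurable f) (hg : Measurable g) :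
    Measurable (fun z => k (f z) (g z)) := hm.comp (hf.prodMk hg)

lemma integral_pi_pair {𝒳 ι : Type*} [Fintype ι] [MeasurableSpace 𝒳] {k : 𝒳 → 𝒳 → ℝ}
    (hm : Measurable (Function.uncurry k)) {C : ℝ} (hC : ∀ x y, |k x y| ≤ C)
    (ν : Measure 𝒳) [IsProbabilityMeasure ν] {i j : ι} (hij : i ≠ j) :
    ∫ x : ι → 𝒳, k (x i) (x j) ∂(Measure.pi fun _ => ν) = ∫ x, ∫ y, k x y ∂ν ∂ν := by
  have h1 : ProbabilityTheory.iIndepFun (fun (i : ι) (x : ι → 𝒳) => x i)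
      (Measure.pi fun _ : ι => ν) :=
    ProbabilityTheory.iIndepFun_pi (X := fun _ x => x) (fun i => aemeasurable_id)
  have h2 := (ProbabilityTheory.indepFun_iff_map_prod_eq_prod_map_map
    (measurable_pi_apply i).aemeasurable (measurable_pi_apply j).aemeasurable).1 (h1.indepFun hij)
  have e : ∀ i, Measure.map (fun x : ι → 𝒳 => x i) (Measure.pi fun _ : ι => ν) = ν :=
    fun i => (measurePreserving_eval (fun _ : ι => ν) i).map_eq
  rw [e, e] at h2
  have h3 : ∫ z, Function.uncurry k z ∂(ν.prod ν) = ∫ x, ∫ y, k x y ∂ν ∂ν :=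
    integral_prod _ (integrable_bdd hm (fun z => hC z.1 z.2))
  rw [← h3, ← h2, integral_map]
  · rfl
  · fun_prop
  · exact hm.aestronglyMeasurable

lemma integral_diag {𝒳 ι : Type*} [Fintype ι] [MeasurableSpace 𝒳] {k : 𝒳 → 𝒳 → ℝ}
    (hm : Measurable (Function.uncurry k))
    (ν : Measure 𝒳) [IsProbabilityMeasure ν] (i : ι) :
    ∫ x : ι → 𝒳, k (x i) (x i) ∂(Measure.pi fun _ => ν) = ∫ x, k x x ∂ν := by
  have hd : Measurable (fun x => k x x) := hm.comp (measurable_id.prodMk measurable_id)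
  exact integral_comp_eval (μ := fun _ : ι => ν) (f := fun x => k x x) hd.aestronglyMeasurable

/-- Expected double sum over iid points. -/
lemma integral_double_sum {𝒳 : Type*} [MeasurableSpace 𝒳] {k : 𝒳 → 𝒳 → ℝ}
    (hm : Measurable (Function.uncurry k)) {C : ℝ} (hC : ∀ x y, |k x y| ≤ C)
    (ν : Measure 𝒳) [IsProbabilityMeasure ν] (n : ℕ) :
    ∫ x : Fin n → 𝒳, ∑ i, ∑ j, k (x i) (x j) ∂(Measure.pi fun _ => ν)
      = n * (∫ x, k x x ∂ν) + (n * n - n) * ∫ x, ∫ y, k x y ∂ν ∂ν := by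
  have hI : ∀ i j : Fin n, Integrable (fun x : Fin n → 𝒳 => k (x i) (x j))
      (Measure.pi fun _ => ν) := fun i j => integrable_bdd
        (meas_comp2 hm (measurable_pi_apply i) (measurable_pi_apply j))
        (fun x => hC _ _)
  rw [integral_finsetSum _ (fun i _ => integrable_finsetSum _ (fun j _ => hI i j))]
  simp_rw [integral_finsetSum _ (fun j _ => hI _ j)]
  have : ∀ i j : Fin n, ∫ x : Fin n → 𝒳, k (x i) (x j) ∂(Measure.pi fun _ => ν)
      = (∫ x, ∫ y, k x y ∂ν ∂ν) +
        if i = j then (∫ x, k x x ∂ν) - (∫ x, ∫ y, k x y ∂ν ∂ν) else 0 := by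
    intro i j
    split_ifs with h
    · subst h
      rw [integral_diag hm ν i]; ring
    · rw [integral_pi_pair hm hC ν h]; ring
  simp_rw [this, Finset.sum_add_distrib]
  simp
  ring

lemma pd_integral_nonneg {𝒳 : Type*} [MeasurableSpace 𝒳] {k : 𝒳 → 𝒳 → ℝ}
    (hm : Measurable (Function.uncurry k)) (hk : IsPosDefKernel k)
    {C : ℝ} (hC : ∀ x y, |k x y| ≤ C)
    (ν : Measure 𝒳) [IsProbabilityMeasure ν] : 0 ≤ ∫ x, ∫ y, k x y ∂ν ∂ν := by
  set I := ∫ x, ∫ y, k x y ∂ν ∂ν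
  have key : ∀ n : ℕ, 0 ≤ C + n * I := by
    intro n
    have h0 : 0 ≤ ∫ x : Fin (n+1) → 𝒳, ∑ i, ∑ j, k (x i) (x j) ∂(Measure.pi fun _ => ν) := by
      apply integral_nonneg
      intro x
      have := hk.2 (n+1) x (fun _ => 1)
      simpa using this
    rw [integral_double_sum hm hC ν] at h0
    have hJ : ∫ x, k x x ∂ν ≤ C := (abs_le.1 (abs_integral_le (fun x => hC x x))).2
    push_cast at h0
    have h1 : 0 ≤ ((n:ℝ)+1) * ((∫ x, k x x ∂ν) + n * I) := by
      convert h0 using 1; ring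
    have h2 := nonneg_of_mul_nonneg_right h1 (by positivity)
    linarith
  by_contra hneg
  push Not at hneg
  obtain ⟨n, hn⟩ := exists_nat_gt (C / (-I))
  rw [div_lt_iff₀ (by linarith)] at hn
  have := key n
  linarith

lemma pd_mixture {𝒳 : Type*} [MeasurableSpace 𝒳] {k : 𝒳 → 𝒳 → ℝ}
    (hm : Measurable (Function.uncurry k)) (hk : IsPosDefKernel k)
    {C : ℝ} (hC : ∀ x y, |k x y| ≤ C) (m : ℕ)
    (ν : Fin m → Measure 𝒳) [∀ i, IsProbabilityMeasure (ν i)] (a : Fin m → ℝ) :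
    0 ≤ ∑ i, ∑ j, a i * a j * ∫ x, ∫ y, k x y ∂(ν j) ∂(ν i) := by
  let K : (Fin m → 𝒳) → (Fin m → 𝒳) → ℝ := fun p q => ∑ i, ∑ j, a i * a j * k (p i) (q j)
  have hKm : Measurable (Function.uncurry K) := by
    refine Finset.measurable_sum _ (fun i _ => Finset.measurable_sum _ (fun j _ => ?_))
    refine Measurable.const_mul ?_ _
    exact meas_comp2 hm ((measurable_pi_apply i).comp measurable_fst)
      ((measurable_pi_apply j).comp measurable_snd)
  have hKC : ∀ p q, |K p q| ≤ ∑ i, ∑ j, |a i * a j| * C := by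
    intro p q
    refine (Finset.abs_sum_le_sum_abs _ _).trans (Finset.sum_le_sum fun i _ => ?_)
    refine (Finset.abs_sum_le_sum_abs _ _).trans (Finset.sum_le_sum fun j _ => ?_)
    rw [abs_mul]
    exact mul_le_mul_of_nonneg_left (hC _ _) (abs_nonneg _)
  have hKpd : IsPosDefKernel K := by
    constructor
    · intro p q
      simp only [K]
      rw [Finset.sum_comm]
      refine Finset.sum_congr rfl fun i _ => Finset.sum_congr rfl fun j _ => ?_
      rw [hk.1 (p j) (q i), mul_comm (a j)]
    · intro n x b
      have h := pd_fintype hk (fun z : Fin n × Fin m => x z.1 z.2) (fun z => b z.1 * a z.2)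
      simp_rw [Fintype.sum_prod_type] at h
      convert h using 2 with r
      rw [Finset.sum_comm]
      refine Finset.sum_congr rfl fun s _ => ?_
      simp only [K, Finset.mul_sum]
      refine Finset.sum_congr rfl fun i _ => Finset.sum_congr rfl fun j _ => ?_
      ring
  have h := pd_integral_nonneg hKm hKpd hKC (Measure.pi ν)
  have inner : ∀ p, ∫ q, K p q ∂(Measure.pi ν) = ∑ i, ∑ j, a i * a j * ∫ y, k (p i) y ∂(ν j) := by
    intro p
    have hI : ∀ i j, Integrable (fun q : Fin m → 𝒳 => a i * a j * k (p i) (q j))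
        (Measure.pi ν) := fun i j => (integrable_bdd
        (meas_comp2 hm measurable_const (measurable_pi_apply j))
        (fun x => hC _ _)).const_mul _
    simp only [K]
    rw [integral_finsetSum _ (fun i _ => integrable_finsetSum _ (fun j _ => hI i j))]
    simp_rw [integral_finsetSum _ (fun j _ => hI _ j)]
    refine Finset.sum_congr rfl fun i _ => Finset.sum_congr rfl fun j _ => ?_
    rw [integral_const_mul]
    congr 1
    exact integral_comp_eval (μ := ν) (f := fun y => k (p i) y)
      (hm.comp (measurable_const.prodMk measurable_id)).aestronglyMeasurable
  simp_rw [inner] at h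
  have hI : ∀ i j, Integrable (fun p : Fin m → 𝒳 => a i * a j * ∫ y, k (p i) y ∂(ν j))
      (Measure.pi ν) := fun i j => (integrable_bdd
        ((meas_inner hm (ν j)).comp (measurable_pi_apply i))
        (fun x => abs_integral_le (fun y => hC _ y))).const_mul _
  rw [integral_finsetSum _ (fun i _ => integrable_finsetSum _ (fun j _ => hI i j))] at h
  simp_rw [integral_finsetSum _ (fun j _ => hI _ j)] at h
  convert h using 4 with i _ j _
  rw [integral_const_mul]
  congr 1
  exact (integral_comp_eval (μ := ν) (f := fun x => ∫ y, k x y ∂(ν j))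
      (meas_inner hm (ν j)).aestronglyMeasurable).symm

lemma sym_integral {𝒳 : Type*} [MeasurableSpace 𝒳] {k : 𝒳 → 𝒳 → ℝ}
    (hm : Measurable (Function.uncurry k)) (hk : IsPosDefKernel k)
    {C : ℝ} (hC : ∀ x y, |k x y| ≤ C) (P Q : Measure 𝒳) [IsProbabilityMeasure P]
    [IsProbabilityMeasure Q] :
    ∫ x, ∫ y, k x y ∂P ∂Q = ∫ x, ∫ y, k x y ∂Q ∂P := by
  rw [integral_integral_swap]
  · simp_rw [fun x y => hk.1 x y]
  · exact integrable_bdd hm (fun z => hC z.1 z.2)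

lemma sqrt_quad_triangle {A b D : ℝ} (hA : 0 ≤ A) (hD : 0 ≤ D)
    (h : ∀ t : ℝ, 0 ≤ D * (t * t) + (2 * b) * t + A) :
    Real.sqrt (A + 2 * b + D) ≤ Real.sqrt A + Real.sqrt D := by
  have h1 := discrim_le_zero h
  unfold discrim at h1
  have h2 : b ≤ Real.sqrt A * Real.sqrt D := by
    rw [← Real.sqrt_mul hA]
    apply Real.le_sqrt_of_sq_le
    nlinarith
  apply Real.sqrt_le_iff.2
  refine ⟨by positivity, ?_⟩
  nlinarith [Real.sq_sqrt hA, Real.sq_sqrt hD]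

lemma mmdSq_nonneg {𝒳 : Type*} [MeasurableSpace 𝒳] {k : 𝒳 → 𝒳 → ℝ}
    (hm : Measurable (Function.uncurry k)) (hk : IsPosDefKernel k)
    {C : ℝ} (hC : ∀ x y, |k x y| ≤ C) (P Q : Measure 𝒳) [IsProbabilityMeasure P]
    [IsProbabilityMeasure Q] : 0 ≤ mmdSq k P Q := by
  have : ∀ i, IsProbabilityMeasure ((![P, Q] : Fin 2 → Measure 𝒳) i) := by
    intro i; fin_cases i <;> simpa
  have h := pd_mixture hm hk hC 2 ![P, Q] ![1, -1]
  simp [Fin.sum_univ_two] at h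
  have := sym_integral hm hk hC P Q
  unfold mmdSq
  linarith

lemma mmd_triangle {𝒳 : Type*} [MeasurableSpace 𝒳] {k : 𝒳 → 𝒳 → ℝ}
    (hm : Measurable (Function.uncurry k)) (hk : IsPosDefKernel k)
    {C : ℝ} (hC : ∀ x y, |k x y| ≤ C) (P Q S : Measure 𝒳) [IsProbabilityMeasure P]
    [IsProbabilityMeasure Q] [IsProbabilityMeasure S] :
    mmd k P S ≤ mmd k P Q + mmd k Q S := by
  have : ∀ i, IsProbabilityMeasure ((![P, Q, S] : Fin 3 → Measure 𝒳) i) := by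
    intro i; fin_cases i <;> simpa
  have e1 := sym_integral hm hk hC P Q
  have e2 := sym_integral hm hk hC P S
  have e3 := sym_integral hm hk hC Q S
  have key := sqrt_quad_triangle (mmdSq_nonneg hm hk hC P Q) (mmdSq_nonneg hm hk hC Q S)
    (b := (∫ x, ∫ y, k x y ∂Q ∂P) - (∫ x, ∫ y, k x y ∂S ∂P) - (∫ x, ∫ y, k x y ∂Q ∂Q)
      + (∫ x, ∫ y, k x y ∂S ∂Q)) (by
      intro t
      have h := pd_mixture hm hk hC 3 ![P, Q, S] ![1, t - 1, -t]
      simp [Fin.sum_univ_three] at h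
      unfold mmdSq
      rw [e1, e2, e3] at h
      linarith)
  unfold mmd
  refine le_trans (le_of_eq ?_) key
  congr 1
  unfold mmdSq
  ring

lemma mmd_comm {𝒳 : Type*} [MeasurableSpace 𝒳] {k : 𝒳 → 𝒳 → ℝ}
    (hm : Measurable (Function.uncurry k)) (hk : IsPosDefKernel k)
    {C : ℝ} (hC : ∀ x y, |k x y| ≤ C) (P Q : Measure 𝒳) [IsProbabilityMeasure P]
    [IsProbabilityMeasure Q] : mmd k P Q = mmd k Q P := by
  unfold mmd mmdSq
  rw [sym_integral hm hk hC P Q]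
  congr 1
  ring

lemma mmd_abs {𝒳 : Type*} [MeasurableSpace 𝒳] {k : 𝒳 → 𝒳 → ℝ}
    (hm : Measurable (Function.uncurry k)) (hk : IsPosDefKernel k)
    {C : ℝ} (hC : ∀ x y, |k x y| ≤ C) (P Q S : Measure 𝒳) [IsProbabilityMeasure P]
    [IsProbabilityMeasure Q] [IsProbabilityMeasure S] :
    |mmd k P Q - mmd k P S| ≤ mmd k Q S := by
  have h1 := mmd_triangle hm hk hC P Q S
  have h2 := mmd_triangle hm hk hC P S Q
  rw [mmd_comm hm hk hC S Q] at h2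
  rw [abs_le]
  constructor <;> linarith

lemma hoeffding_one {𝒳 : Type*} [MeasurableSpace 𝒳] (ν : Measure 𝒳) [IsProbabilityMeasure ν]
    {g : 𝒳 → ℝ} (hg : Measurable g) {c M : ℝ} (hM : ∀ x, |g x| ≤ M)
    (hc : ∀ a b, g a - g b ≤ c) (t : ℝ) :
    ∫ a, Real.exp (t * g a) ∂ν ≤ Real.exp (t * (∫ a, g a ∂ν) + c ^ 2 / 4 * t ^ 2 / 2) := by
  have hne : Nonempty 𝒳 := nonempty_of_isProbabilityMeasure ν
  have hbdd : BddBelow (Set.range g) := ⟨-M, by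
    rintro _ ⟨x, rfl⟩
    exact (abs_le.1 (hM x)).1⟩
  set lo := ⨅ x, g x
  have hIcc : ∀ x, g x ∈ Set.Icc lo (lo + c) := by
    intro x
    refine ⟨ciInf_le hbdd x, ?_⟩
    have : g x - c ≤ lo := le_ciInf fun y => by linarith [hc x y]
    linarith
  have h := (ProbabilityTheory.hasSubgaussianMGF_of_mem_Icc (μ := ν) hg.aemeasurable
    (Filter.Eventually.of_forall hIcc)).mgf_le t
  unfold ProbabilityTheory.mgf at h
  have e : ∀ a, Real.exp (t * g a) =
      Real.exp (t * ∫ a, g a ∂ν) * Real.exp (t * (g a - ∫ a, g a ∂ν)) := by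
    intro a
    rw [← Real.exp_add]
    congr 1; ring
  simp_rw [e]
  rw [integral_const_mul, Real.exp_add]
  refine mul_le_mul_of_nonneg_left (h.trans (le_of_eq ?_)) (Real.exp_nonneg _)
  congr 1
  push_cast
  have : ‖lo + c - lo‖ ^ 2 = c ^ 2 := by
    rw [add_sub_cancel_left, Real.norm_eq_abs, sq_abs]
  rw [div_pow, this]
  norm_num

lemma meas_cons {𝒳 : Type*} [MeasurableSpace 𝒳] (n : ℕ) :
    Measurable (fun p : 𝒳 × (Fin n → 𝒳) => (Fin.cons p.1 p.2 : Fin (n + 1) → 𝒳)) := by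
  refine measurable_pi_lambda _ fun i => ?_
  refine Fin.cases ?_ (fun j => ?_) i
  · simpa using measurable_fst
  · exact (measurable_pi_apply j).comp measurable_snd

lemma pi_succ_integral {𝒳 : Type*} [MeasurableSpace 𝒳] (ν : Measure 𝒳) [IsProbabilityMeasure ν]
    (n : ℕ) {h : (Fin (n + 1) → 𝒳) → ℝ} (hh : Measurable h) {M : ℝ} (hM : ∀ x, |h x| ≤ M) :
    ∫ x, h x ∂(Measure.pi fun _ => ν) =
      ∫ x : Fin n → 𝒳, ∫ a, h (Fin.cons a x) ∂ν ∂(Measure.pi fun _ => ν) := by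
  have mp := measurePreserving_piFinSuccAbove (fun _ : Fin (n + 1) => ν) 0
  have h1 := (mp.symm).integral_comp' h
  rw [← h1]
  have h2 : ∀ z : 𝒳 × (Fin n → 𝒳),
      (MeasurableEquiv.piFinSuccAbove (fun _ : Fin (n + 1) => 𝒳) 0).symm z = Fin.cons z.1 z.2 := by
    intro z
    simp [MeasurableEquiv.piFinSuccAbove, Fin.insertNthEquiv]
  simp_rw [h2]
  exact integral_prod_symm (fun z : 𝒳 × (Fin n → 𝒳) => h (Fin.cons z.1 z.2))
    (integrable_bdd (hh.comp (meas_cons n)) (fun z => hM _))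

lemma abs_exp_le {t u M : ℝ} (h : |u| ≤ M) : |Real.exp (t * u)| ≤ Real.exp (|t| * M) := by
  rw [abs_of_pos (Real.exp_pos _), Real.exp_le_exp]
  calc t * u ≤ |t * u| := le_abs_self _
    _ = |t| * |u| := abs_mul _ _
    _ ≤ _ := mul_le_mul_of_nonneg_left h (abs_nonneg _)

lemma mcdiarmid_mgf {𝒳 : Type*} [MeasurableSpace 𝒳] (ν : Measure 𝒳) [IsProbabilityMeasure ν]
    (c M t : ℝ) : ∀ (n : ℕ) (f : (Fin n → 𝒳) → ℝ), Measurable f → (∀ x, |f x| ≤ M) →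
    (∀ x i y, f x - f (Function.update x i y) ≤ c) →
    ∫ x, Real.exp (t * f x) ∂(Measure.pi fun _ => ν) ≤
      Real.exp (t * (∫ x, f x ∂(Measure.pi fun _ => ν)) + n * (c ^ 2 / 4) * t ^ 2 / 2) := by
  intro n
  induction n with
  | zero =>
    intro f _ _ _
    have : f = fun _ => f (fun i => i.elim0) := by
      funext x; congr 1; exact Subsingleton.elim _ _
    rw [this]
    simp
  | succ n ih =>
    intro f hf hM hc
    have hcm : ∀ x : Fin n → 𝒳, Measurable (fun a : 𝒳 => f (Fin.cons a x)) := fun x =>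
      (hf.comp (meas_cons n)).comp (measurable_id.prodMk measurable_const)
    let g : (Fin n → 𝒳) → ℝ := fun x => ∫ a, f (Fin.cons a x) ∂ν
    have hg : Measurable g :=
      ((hf.comp (meas_cons n)).stronglyMeasurable.integral_prod_left' (μ := ν)).measurable
    have hgM : ∀ x, |g x| ≤ M := fun x => abs_integral_le (fun a => hM _)
    have hgc : ∀ x i y, g x - g (Function.update x i y) ≤ c := by
      intro x i y
      simp only [g]
      rw [← integral_sub (integrable_bdd (hcm _) (fun a => hM _))
        (integrable_bdd (hcm _) (fun a => hM _))]
      have : ∀ a, f (Fin.cons a x) - f (Fin.cons a (Function.update x i y)) ≤ c := by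
        intro a
        rw [Fin.cons_update]
        exact hc _ _ _
      refine (integral_mono ((integrable_bdd (hcm _) (fun a => hM _)).sub
        (integrable_bdd (hcm _) (fun a => hM _))) (integrable_const c) this).trans ?_
      simp
    have h1 := ih g hg hgM hgc
    have hint : ∫ x, f x ∂(Measure.pi fun _ => ν) = ∫ x, g x ∂(Measure.pi fun _ => ν) :=
      pi_succ_integral ν n hf hM
    have hem : Measurable (fun x => Real.exp (t * f x)) := by fun_prop
    have heM : ∀ x, |Real.exp (t * f x)| ≤ Real.exp (|t| * M) := fun x => abs_exp_le (hM x)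
    rw [pi_succ_integral ν n hem heM, hint]
    have h2 : ∀ x : Fin n → 𝒳, ∫ a, Real.exp (t * f (Fin.cons a x)) ∂ν ≤
        Real.exp (t * g x) * Real.exp (c ^ 2 / 4 * t ^ 2 / 2) := by
      intro x
      rw [← Real.exp_add]
      refine hoeffding_one ν (hcm x) (fun a => hM _) (fun a b => ?_) t
      have := hc (Fin.cons a x) 0 b
      rwa [Fin.update_cons_zero] at this
    have hgi : Integrable (fun x => Real.exp (t * g x)) (Measure.pi fun _ : Fin n => ν) :=
      integrable_bdd (by fun_prop) (fun x => abs_exp_le (hgM x))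
    have hli : Integrable (fun x : Fin n → 𝒳 => ∫ a, Real.exp (t * f (Fin.cons a x)) ∂ν)
        (Measure.pi fun _ : Fin n => ν) :=
      integrable_bdd
        ((hem.comp (meas_cons n)).stronglyMeasurable.integral_prod_left' (μ := ν)).measurable
        (fun x => abs_integral_le (fun a => heM _))
    refine (integral_mono hli (hgi.mul_const _) h2).trans ?_
    rw [integral_mul_const]
    refine (mul_le_mul_of_nonneg_right h1 (Real.exp_nonneg _)).trans (le_of_eq ?_)
    rw [← Real.exp_add]
    congr 1
    push_cast
    ring

lemma integral_emp {𝒳 : Type*} [MeasurableSpace 𝒳] {n : ℕ} (x : Fin n → 𝒳) {g : 𝒳 → ℝ}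
    (hg : Measurable g) : ∫ y, g y ∂(empiricalMeasure x) = (n : ℝ)⁻¹ * ∑ i, g (x i) := by
  unfold empiricalMeasure
  rw [integral_smul_measure, integral_finsetSum_measure]
  · simp_rw [fun i => integral_dirac' g (x i) hg.stronglyMeasurable]
    simp
  · intro i _
    exact (integrable_dirac' hg.stronglyMeasurable (by simp))

lemma emp_prob {𝒳 : Type*} [MeasurableSpace 𝒳] {n : ℕ} (hn : 0 < n) (x : Fin n → 𝒳) :
    IsProbabilityMeasure (empiricalMeasure x) := by
  constructor
  unfold empiricalMeasure
  simp
  exact ENNReal.inv_mul_cancel (by exact_mod_cast hn.ne') (by simp)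

lemma mmdSq_emp {𝒳 : Type*} [MeasurableSpace 𝒳] {k : 𝒳 → 𝒳 → ℝ}
    (hm : Measurable (Function.uncurry k)) (Q : Measure 𝒳) [IsProbabilityMeasure Q]
    {C : ℝ} (hC : ∀ x y, |k x y| ≤ C) {n : ℕ} (x : Fin n → 𝒳) :
    mmdSq k Q (empiricalMeasure x) = (∫ x, ∫ y, k x y ∂Q ∂Q)
      - 2 * ((n : ℝ)⁻¹ * ∑ i, ∫ y, k y (x i) ∂Q)
      + (n : ℝ)⁻¹ * ((n : ℝ)⁻¹ * ∑ i, ∑ j, k (x i) (x j)) := by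
  have hr : ∀ u, Measurable (k u) := fun u => meas_comp2 hm measurable_const measurable_id
  have hl : ∀ u, Measurable (fun v => k v u) := fun u =>
    meas_comp2 hm measurable_id measurable_const
  unfold mmdSq
  simp_rw [fun u => integral_emp x (hr u)]
  rw [integral_emp x (g := fun u => (n : ℝ)⁻¹ * ∑ i, k u (x i))
    (Measurable.const_mul (Finset.measurable_sum _ fun i _ => hl _) _),
    integral_const_mul, integral_finsetSum _ (fun i _ => integrable_bdd (hl _) (fun v => hC _ _)),
    ← Finset.mul_sum]

lemma mmdSq_emp_emp {𝒳 : Type*} [MeasurableSpace 𝒳] {k : 𝒳 → 𝒳 → ℝ}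
    (hm : Measurable (Function.uncurry k)) {n : ℕ} (x z : Fin n → 𝒳) :
    mmdSq k (empiricalMeasure x) (empiricalMeasure z) = (n : ℝ)⁻¹ * ((n : ℝ)⁻¹ *
      ((∑ i, ∑ j, k (x i) (x j)) - 2 * (∑ i, ∑ j, k (x i) (z j)) + ∑ i, ∑ j, k (z i) (z j))) := by
  have hr : ∀ u, Measurable (k u) := fun u => meas_comp2 hm measurable_const measurable_id
  have hl : ∀ u, Measurable (fun v => k v u) := fun u =>
    meas_comp2 hm measurable_id measurable_const
  have hs : ∀ w : Fin n → 𝒳, Measurable (fun u => (n : ℝ)⁻¹ * ∑ i, k u (w i)) := fun w =>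
    (Measurable.const_mul (Finset.measurable_sum _ fun i _ => hl _) _)
  unfold mmdSq
  simp_rw [fun (w : Fin n → 𝒳) u => integral_emp w (hr u)]
  rw [integral_emp x (hs x), integral_emp x (hs z), integral_emp z (hs z)]
  simp_rw [← Finset.mul_sum]
  ring

lemma sum_comp_update {𝒳 : Type*} {n : ℕ} (x : Fin n → 𝒳) (l : Fin n) (y : 𝒳) (g : 𝒳 → ℝ) :
    ∑ i, g (Function.update x l y i) = ∑ i, g (x i) - g (x l) + g y := by
  rw [← Finset.add_sum_erase _ _ (Finset.mem_univ l),
    ← Finset.add_sum_erase _ (fun i => g (x i)) (Finset.mem_univ l)]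
  have : ∑ i ∈ Finset.univ.erase l, g (Function.update x l y i)
      = ∑ i ∈ Finset.univ.erase l, g (x i) := by
    refine Finset.sum_congr rfl fun i hi => ?_
    rw [Function.update_of_ne (Finset.ne_of_mem_erase hi)]
  rw [this]
  simp
  ring

lemma mmd_emp_update {𝒳 : Type*} [MeasurableSpace 𝒳] {k : 𝒳 → 𝒳 → ℝ}
    (hm : Measurable (Function.uncurry k)) (hk : IsPosDefKernel k)
    {C : ℝ} (hC : ∀ x y, |k x y| ≤ C) {n : ℕ} (hn : 0 < n) (x : Fin n → 𝒳) (l : Fin n) (y : 𝒳) :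
    mmd k (empiricalMeasure (Function.update x l y)) (empiricalMeasure x)
      ≤ 2 * Real.sqrt C / n := by
  have hC0 : 0 ≤ C := (abs_nonneg _).trans (hC y y)
  unfold mmd
  rw [mmdSq_emp_emp hm, Real.sqrt_le_iff]
  refine ⟨by positivity, ?_⟩
  have e1 : ∀ u, ∑ j, k u (Function.update x l y j) = ∑ j, k u (x j) - k u (x l) + k u y :=
    fun u => sum_comp_update x l y (k u)
  have e2 : ∑ i, ∑ j, k (Function.update x l y i) (x j) =
      ∑ i, ∑ j, k (x i) (x j) - ∑ j, k (x l) (x j) + ∑ j, k y (x j) :=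
    sum_comp_update x l y (fun u => ∑ j, k u (x j))
  have e3 : ∀ v, ∑ i, k (Function.update x l y i) v = ∑ i, k (x i) v - k (x l) v + k y v :=
    fun v => sum_comp_update x l y (fun u => k u v)
  simp_rw [e1, Finset.sum_add_distrib, Finset.sum_sub_distrib]
  rw [e2, e3, e3]
  simp_rw [fun i => hk.1 (x i) (x l), fun i => hk.1 (x i) y]
  have b1 := abs_le.1 (hC (x l) (x l))
  have b2 := abs_le.1 (hC y y)
  have b3 := abs_le.1 (hC y (x l))
  have hs : (2 * Real.sqrt C / n) ^ 2 = (n : ℝ)⁻¹ * ((n : ℝ)⁻¹ * (4 * C)) := by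
    rw [div_pow, mul_pow, Real.sq_sqrt hC0]
    field_simp
    ring
  rw [hs]
  have := hk.1 (x l) y
  gcongr
  linarith

lemma emp_mean_le {𝒳 : Type*} [MeasurableSpace 𝒳] {k : 𝒳 → 𝒳 → ℝ}
    (hm : Measurable (Function.uncurry k)) (hk : IsPosDefKernel k)
    {C : ℝ} (hC : ∀ x y, |k x y| ≤ C) (Q : Measure 𝒳) [IsProbabilityMeasure Q]
    {n : ℕ} (hn : 0 < n) :
    ∫ x : Fin n → 𝒳, mmdSq k Q (empiricalMeasure x) ∂(Measure.pi fun _ => Q) ≤ C / n := by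
  have hn' : (n : ℝ) ≠ 0 := by exact_mod_cast hn.ne'
  have hsw : Measurable (Function.uncurry fun x y => k y x) :=
    meas_comp2 hm measurable_snd measurable_fst
  have hmi : Measurable (fun u => ∫ y, k y u ∂Q) := meas_inner (k := fun x y => k y x) hsw Q
  have hbi : ∀ u, |∫ y, k y u ∂Q| ≤ C := fun u => abs_integral_le (fun y => hC _ _)
  simp_rw [mmdSq_emp hm Q hC]
  have i1 : ∀ i : Fin n, Integrable (fun x : Fin n → 𝒳 => ∫ y, k y (x i) ∂Q)
      (Measure.pi fun _ => Q) := fun i =>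
    integrable_bdd (hmi.comp (measurable_pi_apply i)) (fun x => hbi _)
  have i2 : Integrable (fun x : Fin n → 𝒳 => ∑ i, ∑ j, k (x i) (x j)) (Measure.pi fun _ => Q) :=
    integrable_finsetSum _ fun i _ => integrable_finsetSum _ fun j _ => integrable_bdd
      (meas_comp2 hm (measurable_pi_apply i) (measurable_pi_apply j)) (fun x => hC _ _)
  have i3 := integrable_finsetSum Finset.univ fun i _ => i1 i
  have i4 : Integrable (fun x : Fin n → 𝒳 => (∫ x, ∫ y, k x y ∂Q ∂Q)
      - 2 * ((n : ℝ)⁻¹ * ∑ i, ∫ y, k y (x i) ∂Q)) (Measure.pi fun _ => Q) :=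
    (integrable_const _).sub ((i3.const_mul _).const_mul _)
  rw [integral_add i4
    ((i2.const_mul _).const_mul _), integral_sub (integrable_const _) ((i3.const_mul _).const_mul _),
    integral_const_mul, integral_const_mul, integral_const_mul, integral_const_mul,
    integral_double_sum hm hC, integral_finsetSum _ fun i _ => i1 i]
  have e : ∀ i : Fin n, ∫ x : Fin n → 𝒳, ∫ y, k y (x i) ∂Q ∂(Measure.pi fun _ => Q)
      = ∫ x, ∫ y, k x y ∂Q ∂Q := by
    intro i
    have := integral_comp_eval (μ := fun _ : Fin n => Q) (i := i) (f := fun u => ∫ y, k y u ∂Q)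
      hmi.aestronglyMeasurable
    rw [this]
    simp_rw [hk.1]
  simp_rw [e]
  have hJ : ∫ x, k x x ∂Q ≤ C := (abs_le.1 (abs_integral_le (fun x => hC x x))).2
  have hI := pd_integral_nonneg hm hk hC Q
  simp only [integral_const, probReal_univ, one_smul, smul_eq_mul, Finset.sum_const,
    Finset.card_univ, Fintype.card_fin, nsmul_eq_mul]
  generalize (∫ x, ∫ y, k x y ∂Q ∂Q) = I at *
  generalize (∫ x, k x x ∂Q) = J at *
  have : I - 2 * ((n : ℝ)⁻¹ * (n * I)) + (n : ℝ)⁻¹ * ((n : ℝ)⁻¹ * (n * J + (n * n - n) * I))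
      = (J - I) / n := by
    field_simp
    ring
  try rw [one_mul]
  rw [this]
  gcongr
  linarith

lemma mcdiarmid_tail {𝒳 : Type*} [MeasurableSpace 𝒳] {k : 𝒳 → 𝒳 → ℝ}
    (hm : Measurable (Function.uncurry k)) (hk : IsPosDefKernel k)
    {C : ℝ} (hC0 : 0 < C) (hC : ∀ x y, |k x y| ≤ C) (Q : Measure 𝒳) [IsProbabilityMeasure Q]
    {n : ℕ} (hn : 0 < n) {δ : ℝ} (h0 : 0 < δ) (h1 : δ < 1) :
    (Measure.pi fun _ : Fin n => Q).real {x | Real.sqrt (C / n) +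
      Real.sqrt (2 * C * Real.log (1 / δ) / n) ≤ mmd k Q (empiricalMeasure x)} ≤ δ := by
  have hn' : (0 : ℝ) < n := by exact_mod_cast hn
  have hp : ∀ x : Fin n → 𝒳, IsProbabilityMeasure (empiricalMeasure x) := emp_prob hn
  let f : (Fin n → 𝒳) → ℝ := fun x => mmd k Q (empiricalMeasure x)
  have hsw : Measurable (Function.uncurry fun x y => k y x) :=
    meas_comp2 hm measurable_snd measurable_fst
  have hmi : Measurable (fun u => ∫ y, k y u ∂Q) := meas_inner (k := fun x y => k y x) hsw Q
  have hsqm : Measurable (fun x : Fin n → 𝒳 => mmdSq k Q (empiricalMeasure x)) := by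
    simp_rw [mmdSq_emp hm Q hC]
    refine Measurable.add (measurable_const.sub (Measurable.const_mul (Measurable.const_mul
      (Finset.measurable_sum _ fun i _ => hmi.comp (measurable_pi_apply i)) _) _))
      (Measurable.const_mul (Measurable.const_mul
      (Finset.measurable_sum _ fun i _ => Finset.measurable_sum _ fun j _ =>
        meas_comp2 hm (measurable_pi_apply i) (measurable_pi_apply j)) _) _)
  have hfm : Measurable f := hsqm.sqrt
  have hsq4 : ∀ x : Fin n → 𝒳, mmdSq k Q (empiricalMeasure x) ≤ 4 * C := by
    intro x
    have hh : ∀ (A B : Measure 𝒳) [IsProbabilityMeasure A] [IsProbabilityMeasure B],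
        |∫ x, ∫ y, k x y ∂B ∂A| ≤ C := fun A B _ _ =>
      abs_integral_le fun x => abs_integral_le fun y => hC _ _
    have a1 := abs_le.1 (hh Q Q)
    have a2 := abs_le.1 (hh Q (empiricalMeasure x))
    have a3 := abs_le.1 (hh (empiricalMeasure x) (empiricalMeasure x))
    unfold mmdSq
    linarith
  have hfM : ∀ x, |f x| ≤ Real.sqrt (4 * C) := by
    intro x
    refine (abs_of_nonneg (Real.sqrt_nonneg _)).trans_le ?_
    exact Real.sqrt_le_sqrt (hsq4 x)
  have hfc : ∀ x i y, f x - f (Function.update x i y) ≤ 2 * Real.sqrt C / n := by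
    intro x i y
    have := mmd_triangle hm hk hC Q (empiricalMeasure (Function.update x i y)) (empiricalMeasure x)
    have := mmd_emp_update hm hk hC hn x i y
    simp only [f]
    linarith
  have hmean : ∫ x, f x ∂(Measure.pi fun _ : Fin n => Q) ≤ Real.sqrt (C / n) := by
    apply Real.le_sqrt_of_sq_le
    have hL : MemLp f 2 (Measure.pi fun _ : Fin n => Q) :=
      MemLp.of_bound hfm.aestronglyMeasurable _ (Filter.Eventually.of_forall hfM)
    have hv := ProbabilityTheory.variance_nonneg f (Measure.pi fun _ : Fin n => Q)
    rw [ProbabilityTheory.variance_eq_sub hL] at hv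
    have he : ∫ x, (f ^ 2) x ∂(Measure.pi fun _ : Fin n => Q) =
        ∫ x : Fin n → 𝒳, mmdSq k Q (empiricalMeasure x) ∂(Measure.pi fun _ => Q) := by
      congr 1
      funext x
      exact Real.sq_sqrt (mmdSq_nonneg hm hk hC Q (empiricalMeasure x))
    rw [he] at hv
    have := emp_mean_le hm hk hC Q hn
    linarith
  set m := ∫ x, f x ∂(Measure.pi fun _ : Fin n => Q)
  set s := Real.sqrt (2 * C * Real.log (1 / δ) / n) with hs
  have hlog : 0 ≤ Real.log (1 / δ) := Real.log_nonneg (by rw [le_div_iff₀ h0]; linarith)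
  have hs0 : 0 ≤ s := Real.sqrt_nonneg _
  have hs2 : s ^ 2 = 2 * C * Real.log (1 / δ) / n := Real.sq_sqrt (by positivity)
  have ht : 0 ≤ s * n / C := by positivity
  have hmgf := mcdiarmid_mgf Q (2 * Real.sqrt C / n) _ (s * n / C) n f hfm hfM hfc
  have hch := ProbabilityTheory.measure_ge_le_exp_mul_mgf (μ := Measure.pi fun _ : Fin n => Q)
    (X := f) (m + s) ht (integrable_bdd (by fun_prop) (fun x => abs_exp_le (hfM x)))
  have hsub : {x : Fin n → 𝒳 | Real.sqrt (C / n) + s ≤ mmd k Q (empiricalMeasure x)} ⊆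
      {x | m + s ≤ f x} := by
    intro x hx
    simp only [Set.mem_ofPred_eq, f] at hx ⊢
    linarith
  refine (measureReal_mono hsub).trans (hch.trans ?_)
  unfold ProbabilityTheory.mgf
  refine (mul_le_mul_of_nonneg_left hmgf (Real.exp_nonneg _)).trans (le_of_eq ?_)
  rw [← Real.exp_add]
  have hx : -(s * n / C) * (m + s) + (s * n / C * m +
      n * ((2 * Real.sqrt C / n) ^ 2 / 4) * (s * n / C) ^ 2 / 2) = Real.log δ := by
    rw [div_pow (2 * Real.sqrt C), mul_pow, Real.sq_sqrt hC0.le]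
    have : -(s * n / C) * (m + s) + (s * n / C * m +
      n * (2 ^ 2 * C / n ^ 2 / 4) * (s * n / C) ^ 2 / 2) = - (s ^ 2 * n / (2 * C)) := by
      field_simp
      ring
    rw [this, hs2, one_div, Real.log_inv]
    field_simp
  rw [hx, Real.exp_log h0]

/-- **MMD sample complexity for the empirical measure** (root-`n` concentration).
Let `k` be a symmetric positive-definite kernel bounded by `Ck`, `Q` a probability measure,
and `X 1, …, X n` i.i.d. samples from `Q` defined on a probability space `(Ω, μ)`. Then for
any probability measure `P` and any `δ ∈ (0,1)`, with probability at least `1 − δ`,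
`|MMD_k(P,Q) − MMD_k(P,Qⁿ)| ≤ 2√(Ck/n) + √(2 Ck log(1/δ)/n)`, where `Qⁿ` is the empirical
measure of the samples; in particular the error is `O(n^{-1/2})` with high probability. -/
theorem mmd_empirical_concentration
    {𝒳 Ω : Type*} [MeasurableSpace 𝒳] [MeasurableSpace Ω]
    (k : 𝒳 → 𝒳 → ℝ) (hk_meas : Measurable (Function.uncurry k))
    (hk_pd : IsPosDefKernel k)
    (Ck : ℝ) (hCk : ∀ x x', k x x' ≤ Ck)
    (μ : Measure Ω) [IsProbabilityMeasure μ]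
    (Q : Measure 𝒳) [IsProbabilityMeasure Q]
    (n : ℕ) (hn : 0 < n)
    (X : Fin n → Ω → 𝒳) (hX_meas : ∀ i, Measurable (X i))
    (hX_law : ∀ i, Measure.map (X i) μ = Q)
    (hX_indep : ProbabilityTheory.iIndepFun X μ)
    (P : Measure 𝒳) [IsProbabilityMeasure P]
    (δ : ℝ) (hδ : δ ∈ Set.Ioo (0 : ℝ) 1) :
    1 - ENNReal.ofReal δ ≤
      μ {ω | |mmd k P Q - mmd k P (empiricalMeasure (fun i => X i ω))| ≤
        2 * Real.sqrt (Ck / n) + Real.sqrt (2 * Ck * Real.log (1 / δ) / n)} := by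

  have hC := pd_abs_le hk_pd hCk
  have hne : Nonempty 𝒳 := nonempty_of_isProbabilityMeasure Q
  obtain ⟨x0⟩ := hne
  have hC0 : 0 ≤ Ck := (abs_nonneg _).trans (hC x0 x0)
  have hδ0 := hδ.1
  have hδ1 := hδ.2
  have hp : ∀ x : Fin n → 𝒳, IsProbabilityMeasure (empiricalMeasure x) := emp_prob hn
  set G := {ω | |mmd k P Q - mmd k P (empiricalMeasure (fun i => X i ω))| ≤
        2 * Real.sqrt (Ck / n) + Real.sqrt (2 * Ck * Real.log (1 / δ) / n)} with hG
  rcases hC0.eq_or_lt with hz | hpos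
  · have hk0 : ∀ x y, k x y = 0 := fun x y => by
      have := hC x y
      rw [← hz] at this
      exact abs_nonpos_iff.1 this
    have : G = Set.univ := by
      apply Set.eq_univ_of_forall
      intro ω
      simp [hG, mmd, mmdSq, hk0]
      positivity
    rw [this]
    simp
  · have hlaw : μ.map (fun ω i => X i ω) = Measure.pi fun _ : Fin n => Q := by
      have := (ProbabilityTheory.iIndepFun_iff_map_fun_eq_pi_map
        (fun i => (hX_meas i).aemeasurable)).1 hX_indep
      rw [this]
      simp_rw [hX_law]
    have htail := mcdiarmid_tail hk_meas hk_pd hpos hC Q hn hδ0 hδ1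
    set T := {x : Fin n → 𝒳 | Real.sqrt (Ck / n) +
      Real.sqrt (2 * Ck * Real.log (1 / δ) / n) ≤ mmd k Q (empiricalMeasure x)} with hT
    have hsub : Gᶜ ⊆ (fun ω i => X i ω) ⁻¹' T := by
      intro ω hω
      simp only [hG, Set.mem_compl_iff, Set.mem_ofPred_eq, not_le] at hω
      simp only [hT, Set.mem_preimage, Set.mem_ofPred_eq]
      have h1 := mmd_abs hk_meas hk_pd hC P Q (empiricalMeasure (fun i => X i ω))
      have h2 := Real.sqrt_nonneg (Ck / n)
      linarith
    have hbad : μ Gᶜ ≤ ENNReal.ofReal δ := by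
      calc μ Gᶜ ≤ μ ((fun ω i => X i ω) ⁻¹' T) := measure_mono hsub
        _ ≤ μ.map (fun ω i => X i ω) T :=
          Measure.le_map_apply (measurable_pi_lambda _ hX_meas).aemeasurable T
        _ = (Measure.pi fun _ : Fin n => Q) T := by rw [hlaw]
        _ ≤ ENNReal.ofReal δ := by
          rw [← ofReal_measureReal]
          exact ENNReal.ofReal_le_ofReal htail
    rw [tsub_le_iff_right]
    calc (1 : ℝ≥0∞) = μ (G ∪ Gᶜ) := by simp
      _ ≤ μ G + μ Gᶜ := measure_union_le _ _
      _ ≤ μ G + ENNReal.ofReal δ := by gcongr
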